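/- arXiv:1507.02409 — 2 statements merged into one kernel-verified Lean document; each statement's English description precedes it below -/
import Mathlib

section
/- Let d ≥ 1 and let Φ be a complex-valued Schwartz function on ℝ^d with ∫_{ℝ^d} Φ = 0. There is a constant C depending only on d and Φ with the following property. Let N ≥ 0 and let f : ℝ^d → ℂ be measurable with ∫_{ℝ^d} |f(t)|²/(1+|t|)^{d+1} dt < ∞ and such that for every ball B ⊂ ℝ^d, (1/|B|) ∫_B |f(t) − f_B|² dt ≤ N², where f_B = (1/|B|)∫_B f. Then for every ball B of radius r: ∫_B ∫_0^r |Φ_ε * f(s)|² (dε/ε) ds ≤ C N² |B|. -/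
open MeasureTheory Real Complex

noncomputable section

/-- `ℝ^d`. -/
abbrev Ed (d : ℕ) := EuclideanSpace ℝ (Fin d)

/-- Dilation `Φ_ε(s) = ε^{-d} Φ(s/ε)`. -/
def dil (d : ℕ) (Φ : Ed d → ℂ) (ε : ℝ) (s : Ed d) : ℂ :=
  ((ε : ℂ) ^ d)⁻¹ * Φ (ε⁻¹ • s)

/-- Convolution `g * f (s) = ∫ g(s-t) f(t) dt`. -/
def cnv (d : ℕ) (g f : Ed d → ℂ) (s : Ed d) : ℂ :=
  ∫ t, g (s - t) * f t

/-- Mean of `f` over the ball of center `z` and radius `r`. -/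
def avgB (d : ℕ) (f : Ed d → ℂ) (z : Ed d) (r : ℝ) : ℂ :=
  (volume (Metric.ball z r)).toReal⁻¹ • ∫ t in Metric.ball z r, f t

open scoped FourierTransform ENNReal Topology
open Filter

lemma fourier_bound (d : ℕ) (Φ : SchwartzMap (Ed d) ℂ) (hΦ0 : ∫ s, Φ s = 0) :
    ∃ K : ℝ, 0 < K ∧ ∀ η : Ed d, ‖𝓕 Φ η‖ * (1 + ‖η‖ ^ 2) ≤ K * ‖η‖ := by
  set g : SchwartzMap (Ed d) ℂ := 𝓕 Φ with hg
  have h0 : g 0 = 0 := by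
    rw [hg, SchwartzMap.fourier_coe, Real.fourier_eq]
    simpa using hΦ0
  have hdecay := SchwartzMap.norm_pow_mul_le_seminorm ℝ g 1
  have hL : ∀ η, ‖g η‖ ≤ SchwartzMap.seminorm ℝ 0 1 g * ‖η‖ := by
    intro η
    have := Convex.norm_image_sub_le_of_norm_fderiv_le (𝕜 := ℝ) (f := g) (s := Set.univ)
      (C := SchwartzMap.seminorm ℝ 0 1 g) (x := 0) (y := η)
      (fun x _ => g.differentiableAt) (fun x _ => by
        have := SchwartzMap.le_seminorm ℝ 0 1 g x
        simpa [norm_iteratedFDeriv_one] using this) convex_univ (Set.mem_univ _) (Set.mem_univ _)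
    simpa [h0] using this
  set A := SchwartzMap.seminorm ℝ 0 1 g
  set B := SchwartzMap.seminorm ℝ 1 0 g
  have hA : 0 ≤ A := apply_nonneg _ _
  have hB : 0 ≤ B := apply_nonneg _ _
  refine ⟨A + B + 1, by positivity, fun η => ?_⟩
  have h1 := hL η
  have h2 := hdecay η
  rw [pow_one] at h2
  have h3 := norm_nonneg η
  nlinarith [mul_le_mul_of_nonneg_right h2 h3]

lemma eps_integral (a : ℝ) :
    ∫⁻ ε in Set.Ioi (0 : ℝ), ENNReal.ofReal (ε * a ^ 2 / (1 + ε ^ 2 * a ^ 2) ^ 2) ≤ 1 := by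
  rcases eq_or_ne a 0 with rfl | ha
  · simp
  have hder : ∀ x ∈ Set.Ici (0 : ℝ),
      HasDerivAt (fun ε : ℝ => - (1 / 2) * (1 + ε ^ 2 * a ^ 2)⁻¹)
        (x * a ^ 2 / (1 + x ^ 2 * a ^ 2) ^ 2) x := by
    intro x _
    have h1 : HasDerivAt (fun ε : ℝ => 1 + ε ^ 2 * a ^ 2) (2 * x * a ^ 2) x := by
      have := ((hasDerivAt_pow 2 x).mul_const (a ^ 2)).const_add 1
      simpa using this
    have h2 := (h1.fun_inv (by positivity)).const_mul (-(1 / 2))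
    refine h2.congr_deriv ?_
    ring
  have hlim : Tendsto (fun ε : ℝ => - (1 / 2) * (1 + ε ^ 2 * a ^ 2)⁻¹) atTop (𝓝 0) := by
    have : Tendsto (fun ε : ℝ => 1 + ε ^ 2 * a ^ 2) atTop atTop := by
      apply tendsto_atTop_add_const_left
      exact (tendsto_pow_atTop (by norm_num)).atTop_mul_const (by positivity)
    simpa using (tendsto_inv_atTop_zero.comp this).const_mul (-(1 / 2) : ℝ)
  have hpos : ∀ x ∈ Set.Ioi (0 : ℝ), 0 ≤ x * a ^ 2 / (1 + x ^ 2 * a ^ 2) ^ 2 := by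
    intro x hx
    have : 0 < x := hx
    positivity
  have hi := integrableOn_Ioi_deriv_of_nonneg' hder hpos hlim
  have hv := integral_Ioi_of_hasDerivAt_of_nonneg' hder hpos hlim
  rw [← ofReal_integral_eq_lintegral_ofReal hi
    ((ae_restrict_iff' measurableSet_Ioi).2 (Eventually.of_forall hpos)), hv]
  norm_num

/-- The dilate as a Schwartz function. -/
def dilS (d : ℕ) (Φ : SchwartzMap (Ed d) ℂ) (ε : ℝ) (hε : 0 < ε) : SchwartzMap (Ed d) ℂ :=
  ((ε : ℂ) ^ d)⁻¹ • SchwartzMap.compCLMOfContinuousLinearEquiv ℂ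
    (ContinuousLinearEquiv.smulLeft (Units.mk0 ε⁻¹ (inv_ne_zero hε.ne')) : Ed d ≃L[ℝ] Ed d) Φ

lemma dilS_apply (d : ℕ) (Φ : SchwartzMap (Ed d) ℂ) (ε : ℝ) (hε : 0 < ε) (s : Ed d) :
    dilS d Φ ε hε s = dil d (fun x => Φ x) ε s := by
  simp [dilS, dil]

lemma fourier_dilS (d : ℕ) (Φ : SchwartzMap (Ed d) ℂ) (ε : ℝ) (hε : 0 < ε) (ξ : Ed d) :
    𝓕 (dilS d Φ ε hε) ξ = 𝓕 Φ (ε • ξ) := by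
  rw [SchwartzMap.fourier_coe, SchwartzMap.fourier_coe, Real.fourier_eq, Real.fourier_eq]
  have := Measure.integral_comp_inv_smul_of_nonneg (μ := (volume : Measure (Ed d)))
    (fun v => (𝐞 (-inner ℝ v (ε • ξ)) : Circle) • Φ v) hε.le
  simp only [dilS_apply, dil]
  have h2 : ∀ v : Ed d, (𝐞 (-inner ℝ v ξ) : Circle) • (((ε : ℂ) ^ d)⁻¹ * Φ (ε⁻¹ • v))
     = ((ε : ℂ) ^ d)⁻¹ * ((𝐞 (-inner ℝ (ε⁻¹ • v) (ε • ξ)) : Circle) • Φ (ε⁻¹ • v)) := by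
    intro v
    rw [inner_smul_left, inner_smul_right]
    simp only [conj_trivial]
    rw [inv_mul_cancel_left₀ hε.ne', Circle.smul_def, Circle.smul_def]
    simp only [smul_eq_mul]
    ring
  simp_rw [h2]
  rw [integral_const_mul, this]
  simp only [finrank_euclideanSpace, Fintype.card_fin, Complex.real_smul]
  push_cast
  rw [inv_mul_cancel_left₀]
  exact pow_ne_zero _ (by exact_mod_cast hε.ne')

lemma schwartz_lint (d : ℕ) (h : SchwartzMap (Ed d) ℂ) :
    ∫⁻ s, ‖h s‖ₑ ^ 2 = ENNReal.ofReal (∫ s, ‖h s‖ ^ 2) := by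
  rw [ofReal_integral_eq_lintegral_ofReal]
  · simp [ENNReal.ofReal_pow, ofReal_norm]
  · exact (memLp_two_iff_integrable_sq_norm h.continuous.aestronglyMeasurable).1 (h.memLp 2)
  · exact Eventually.of_forall fun _ => by positivity

lemma plancherel_cnv (d : ℕ) (Φ g : SchwartzMap (Ed d) ℂ) (ε : ℝ) (hε : 0 < ε) :
    ∫⁻ s, ‖cnv d (dil d (fun x => Φ x) ε) (fun x => g x) s‖ₑ ^ 2
      = ∫⁻ ξ, ‖𝓕 Φ (ε • ξ)‖ₑ ^ 2 * ‖𝓕 g ξ‖ₑ ^ 2 := by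
  set h := SchwartzMap.convolution (ContinuousLinearMap.mul ℂ ℂ) g (dilS d Φ ε hε) with hh
  have h1 : ∀ s, cnv d (dil d (fun x => Φ x) ε) (fun x => g x) s = h s := by
    intro s
    rw [hh, SchwartzMap.convolution_apply, MeasureTheory.convolution_def]
    simp only [cnv, ContinuousLinearMap.mul_apply', dilS_apply]
    congr 1; ext t; ring
  have h2 : ∀ ξ, 𝓕 h ξ = 𝓕 g ξ * 𝓕 Φ (ε • ξ) := by
    intro ξ
    rw [hh, SchwartzMap.fourier_convolution, SchwartzMap.pairing_apply_apply, fourier_dilS]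
    rfl
  simp_rw [h1]
  rw [schwartz_lint, ← SchwartzMap.integral_norm_sq_fourier, ← schwartz_lint]
  congr 1; ext ξ
  rw [h2, enorm_mul, mul_pow, mul_comm]

lemma measurable_cnv (d : ℕ) (Φ : SchwartzMap (Ed d) ℂ) (g : Ed d → ℂ) (hg : Measurable g) :
    Measurable (fun p : Ed d × ℝ => cnv d (dil d (fun x => Φ x) p.2) g p.1) := by
  have hm : Measurable (fun q : (Ed d × ℝ) × Ed d =>
      dil d (fun x => Φ x) q.1.2 (q.1.1 - q.2) * g q.2) := by
    unfold dil
    have h1 : Measurable (fun q : (Ed d × ℝ) × Ed d => Φ (q.1.2⁻¹ • (q.1.1 - q.2))) :=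
      Φ.continuous.measurable.comp (by fun_prop)
    fun_prop
  exact (hm.stronglyMeasurable.integral_prod_right (ν := volume)).measurable

/-- Square function bound for Schwartz functions. -/
lemma square_schwartz (d : ℕ) (Φ : SchwartzMap (Ed d) ℂ) (K : ℝ)
    (hK : 0 < K) (hΦ : ∀ η : Ed d, ‖𝓕 Φ η‖ * (1 + ‖η‖ ^ 2) ≤ K * ‖η‖)
    (g : SchwartzMap (Ed d) ℂ) :
    ∫⁻ p, ‖cnv d (dil d (fun x => Φ x) p.2) (fun x => g x) p.1‖ₑ ^ 2 * ENNReal.ofReal (p.2⁻¹)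
        ∂((volume : Measure (Ed d)).prod (volume.restrict (Set.Ioi (0 : ℝ))))
      ≤ ENNReal.ofReal (K ^ 2) * ∫⁻ s, ‖g s‖ₑ ^ 2 := by
  rw [lintegral_prod_symm']
  swap
  · exact ((measurable_cnv d Φ _ g.continuous.measurable).enorm.pow_const 2).mul (by fun_prop)
  calc ∫⁻ ε in Set.Ioi (0 : ℝ), ∫⁻ s, ‖cnv d (dil d (fun x => Φ x) ε) (fun x => g x) s‖ₑ ^ 2
          * ENNReal.ofReal (ε⁻¹)
      = ∫⁻ ε in Set.Ioi (0 : ℝ), ∫⁻ ξ, ‖𝓕 Φ (ε • ξ)‖ₑ ^ 2 * ‖𝓕 g ξ‖ₑ ^ 2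
          * ENNReal.ofReal (ε⁻¹) := by
        refine setLIntegral_congr_fun measurableSet_Ioi fun ε hε => ?_
        beta_reduce
        rw [lintegral_mul_const' _ _ (by simp), lintegral_mul_const' _ _ (by simp),
          plancherel_cnv d Φ g ε hε]
    _ = ∫⁻ ξ, ∫⁻ ε in Set.Ioi (0 : ℝ), ‖𝓕 Φ (ε • ξ)‖ₑ ^ 2 * ‖𝓕 g ξ‖ₑ ^ 2
          * ENNReal.ofReal (ε⁻¹) := by
        apply lintegral_lintegral_swap
        apply Measurable.aemeasurable
        have h1 : Measurable (fun q : ℝ × Ed d => 𝓕 Φ (q.1 • q.2)) :=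
          (𝓕 Φ).continuous.measurable.comp (by fun_prop)
        have h2 : Measurable (fun q : ℝ × Ed d => 𝓕 g q.2) :=
          (𝓕 g).continuous.measurable.comp (by fun_prop)
        exact ((h1.enorm.pow_const 2).mul (h2.enorm.pow_const 2)).mul (by fun_prop)
    _ ≤ ∫⁻ ξ, ∫⁻ ε in Set.Ioi (0 : ℝ), (ENNReal.ofReal (K ^ 2) * ‖𝓕 g ξ‖ₑ ^ 2) *
          ENNReal.ofReal (ε * ‖ξ‖ ^ 2 / (1 + ε ^ 2 * ‖ξ‖ ^ 2) ^ 2) := by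
        refine lintegral_mono fun ξ => setLIntegral_mono' measurableSet_Ioi fun ε hε => ?_
        have hε' : 0 < ε := hε
        have h1 : ‖𝓕 Φ (ε • ξ)‖ ^ 2 * ε⁻¹ ≤
            K ^ 2 * (ε * ‖ξ‖ ^ 2 / (1 + ε ^ 2 * ‖ξ‖ ^ 2) ^ 2) := by
          have h := hΦ (ε • ξ)
          rw [norm_smul, Real.norm_of_nonneg hε'.le, mul_pow, ← le_div_iff₀ (by positivity)] at h
          calc ‖𝓕 Φ (ε • ξ)‖ ^ 2 * ε⁻¹ 
              ≤ (K * (ε * ‖ξ‖) / (1 + ε ^ 2 * ‖ξ‖ ^ 2)) ^ 2 * ε⁻¹ := by gcongr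
            _ = _ := by field_simp
        have h2 : ‖𝓕 Φ (ε • ξ)‖ₑ ^ 2 * ENNReal.ofReal ε⁻¹ ≤
            ENNReal.ofReal (K ^ 2) *
              ENNReal.ofReal (ε * ‖ξ‖ ^ 2 / (1 + ε ^ 2 * ‖ξ‖ ^ 2) ^ 2) := by
          rw [← ENNReal.ofReal_mul (by positivity), ← ofReal_norm,
            ← ENNReal.ofReal_pow (by positivity), ← ENNReal.ofReal_mul (by positivity)]
          exact ENNReal.ofReal_le_ofReal h1
        calc _ = (‖𝓕 Φ (ε • ξ)‖ₑ ^ 2 * ENNReal.ofReal ε⁻¹) * ‖𝓕 g ξ‖ₑ ^ 2 := by ring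
          _ ≤ (ENNReal.ofReal (K ^ 2) *
              ENNReal.ofReal (ε * ‖ξ‖ ^ 2 / (1 + ε ^ 2 * ‖ξ‖ ^ 2) ^ 2)) * ‖𝓕 g ξ‖ₑ ^ 2 := by gcongr
          _ = _ := by rw [mul_right_comm]
    _ ≤ ∫⁻ ξ, ENNReal.ofReal (K ^ 2) * ‖𝓕 g ξ‖ₑ ^ 2 := by
        refine lintegral_mono fun ξ => ?_
        rw [lintegral_const_mul' _ _ (by finiteness)]
        calc _ ≤ (ENNReal.ofReal (K ^ 2) * ‖𝓕 g ξ‖ₑ ^ 2) * 1 := by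
              gcongr
              exact eps_integral ‖ξ‖
          _ = _ := mul_one _
    _ = _ := by
        rw [lintegral_const_mul' _ _ (by simp), schwartz_lint, schwartz_lint,
          SchwartzMap.integral_norm_sq_fourier]

lemma cnv_tendsto (d : ℕ) (k : SchwartzMap (Ed d) ℂ) (g : ℕ → SchwartzMap (Ed d) ℂ)
    (f : Ed d → ℂ) (hf : MemLp f 2)
    (hg : Tendsto (fun n => (g n).toLp 2) atTop (𝓝 (hf.toLp f))) (s : Ed d) :
    Tendsto (fun n => cnv d (fun x => k x) (fun x => g n x) s) atTop
      (𝓝 (cnv d (fun x => k x) f s)) := by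
  have hk : MemLp (fun t => (starRingEnd ℂ) (k (s - t))) 2 := by
    have := (k.memLp 2).comp_measurePreserving
      (Measure.measurePreserving_sub_left (volume : Measure (Ed d)) s)
    exact this.star
  have key : ∀ (h : Ed d → ℂ) (hh : MemLp h 2),
      inner ℂ (hk.toLp _) (hh.toLp h) = cnv d (fun x => k x) h s := by
    intro h hh
    rw [L2.inner_def]
    apply integral_congr_ae
    filter_upwards [hk.coeFn_toLp, hh.coeFn_toLp] with t h1 h2
    rw [h1, h2]
    simp [mul_comm]
  have h3 := (tendsto_const_nhds (x := hk.toLp _)).inner (𝕜 := ℂ) hg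
  rw [key] at h3
  refine h3.congr fun n => ?_
  exact key _ ((g n).memLp 2)

lemma lint_toLp (d : ℕ) (f : Ed d → ℂ) (hf : MemLp f 2) :
    ∫⁻ s, ‖f s‖ₑ ^ 2 = ENNReal.ofReal (‖hf.toLp f‖ ^ 2) := by
  rw [Lp.norm_toLp, ENNReal.ofReal_pow (by positivity), ENNReal.ofReal_toReal hf.eLpNorm_ne_top,
    eLpNorm_eq_lintegral_rpow_enorm_toReal (by simp) (by simp)]
  simp only [ENNReal.toReal_ofNat, ENNReal.rpow_ofNat]
  rw [← ENNReal.rpow_natCast, ← ENNReal.rpow_mul]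
  simp

lemma square_L2 (d : ℕ) (Φ : SchwartzMap (Ed d) ℂ) (K : ℝ)
    (hK : 0 < K) (hΦ : ∀ η : Ed d, ‖𝓕 Φ η‖ * (1 + ‖η‖ ^ 2) ≤ K * ‖η‖)
    (f : Ed d → ℂ) (hfm : Measurable f) (hf : MemLp f 2) :
    ∫⁻ s, ∫⁻ ε in Set.Ioi (0 : ℝ), ‖cnv d (dil d (fun x => Φ x) ε) f s‖ₑ ^ 2
        * ENNReal.ofReal (ε⁻¹)
      ≤ ENNReal.ofReal (K ^ 2) * ∫⁻ s, ‖f s‖ₑ ^ 2 := by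
  have hmeas : ∀ h : Ed d → ℂ, Measurable h → Measurable (fun p : Ed d × ℝ =>
      ‖cnv d (dil d (fun x => Φ x) p.2) h p.1‖ₑ ^ 2 * ENNReal.ofReal (p.2⁻¹)) := fun h hh =>
    ((measurable_cnv d Φ _ hh).enorm.pow_const 2).mul (by fun_prop)
  have hdense := SchwartzMap.denseRange_toLpCLM (F := ℂ) (E := Ed d) (p := 2)
    (μ := volume) (by simp)
  obtain ⟨u, hu, hlim⟩ := mem_closure_iff_seq_limit.1 (hdense (hf.toLp f))
  choose g hg using hu
  have hlim' : Tendsto (fun n => (g n).toLp 2) atTop (𝓝 (hf.toLp f)) := by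
    refine hlim.congr fun n => ?_
    rw [← hg n]; rfl
  rw [← lintegral_prod (μ := (volume : Measure (Ed d))) (ν := volume.restrict (Set.Ioi (0 : ℝ)))
    (fun p : Ed d × ℝ =>
      ‖cnv d (dil d (fun x => Φ x) p.2) f p.1‖ₑ ^ 2 * ENNReal.ofReal (p.2⁻¹))
    (hmeas f hfm).aemeasurable]
  have hpt : ∀ᵐ p ∂((volume : Measure (Ed d)).prod (volume.restrict (Set.Ioi (0 : ℝ)))),
      ‖cnv d (dil d (fun x => Φ x) p.2) f p.1‖ₑ ^ 2 * ENNReal.ofReal (p.2⁻¹) =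
      liminf (fun n => ‖cnv d (dil d (fun x => Φ x) p.2) (fun x => g n x) p.1‖ₑ ^ 2
        * ENNReal.ofReal (p.2⁻¹)) atTop := by
    have h1 : ∀ᵐ p ∂((volume : Measure (Ed d)).prod (volume.restrict (Set.Ioi (0 : ℝ)))),
        0 < p.2 := by
      have : ∀ᵐ ε ∂(volume.restrict (Set.Ioi (0 : ℝ))), 0 < ε :=
        ae_restrict_mem measurableSet_Ioi
      exact Measure.quasiMeasurePreserving_snd.ae this
    filter_upwards [h1] with p hp
    have h2 := cnv_tendsto d (dilS d Φ p.2 hp) g f hf hlim' p.1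
    simp only [dilS_apply] at h2
    have h3 := ENNReal.Tendsto.mul_const (b := ENNReal.ofReal (p.2⁻¹))
      ((ENNReal.continuous_pow 2).continuousAt.tendsto.comp h2.enorm) (Or.inr (by simp))
    exact h3.liminf_eq.symm
  rw [lintegral_congr_ae hpt]
  refine (lintegral_liminf_le fun n => hmeas _ (g n).continuous.measurable).trans ?_
  have hb : Tendsto (fun n => ENNReal.ofReal (K ^ 2) * ∫⁻ s, ‖g n s‖ₑ ^ 2) atTop
      (𝓝 (ENNReal.ofReal (K ^ 2) * ∫⁻ s, ‖f s‖ₑ ^ 2)) := by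
    apply ENNReal.Tendsto.const_mul _ (Or.inr (by simp))
    rw [lint_toLp d f hf]
    have : ∀ n, ∫⁻ s, ‖g n s‖ₑ ^ 2 = ENNReal.ofReal (‖(g n).toLp 2‖ ^ 2) := fun n =>
      lint_toLp d _ ((g n).memLp 2)
    simp_rw [this]
    exact ENNReal.tendsto_ofReal (hlim'.norm.pow 2)
  rw [← hb.liminf_eq]
  exact liminf_le_liminf (Eventually.of_forall fun n => square_schwartz d Φ K hK hΦ (g n))

lemma finite_ball (d : ℕ) (z : Ed d) (r : ℝ) :
    IsFiniteMeasure (volume.restrict (Metric.ball z r)) :=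
  ⟨by rw [Measure.restrict_apply_univ]; exact measure_ball_lt_top⟩

lemma memLp_ball (d : ℕ) (f : Ed d → ℂ) (hfm : Measurable f)
    (hint : Integrable (fun t : Ed d => ‖f t‖ ^ 2 / (1 + ‖t‖) ^ (d + 1)) volume)
    (z : Ed d) (r : ℝ) : MemLp f 2 (volume.restrict (Metric.ball z r)) := by
  rw [memLp_two_iff_integrable_sq_norm hfm.aestronglyMeasurable]
  have h1 := (hint.const_mul ((1 + (‖z‖ + |r|)) ^ (d + 1))).integrableOn (s := Metric.ball z r)
  refine h1.mono' (by fun_prop) ?_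
  refine (ae_restrict_iff' measurableSet_ball).2 (Eventually.of_forall fun t ht => ?_)
  have ht' : ‖t‖ ≤ ‖z‖ + |r| := by
    have h2 : ‖t - z‖ < r := mem_ball_iff_norm.1 ht
    have h3 := norm_le_norm_add_norm_sub z t
    have h4 := le_abs_self r
    rw [norm_sub_rev] at h3
    linarith
  rw [Real.norm_of_nonneg (by positivity), mul_div_assoc', le_div_iff₀ (by positivity), mul_comm]
  gcongr

lemma vol_ball (d : ℕ) (z : Ed d) (r : ℝ) (hr : 0 < r) :
    (volume (Metric.ball z r)).toReal
      = r ^ d * (volume (Metric.ball (0 : Ed d) 1)).toReal := by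
  rw [Measure.addHaar_ball_of_pos _ _ hr, ENNReal.toReal_mul, ENNReal.toReal_ofReal (by positivity)]
  simp

lemma vol_pos (d : ℕ) (z : Ed d) (r : ℝ) (hr : 0 < r) :
    0 < (volume (Metric.ball z r)).toReal :=
  ENNReal.toReal_pos (Metric.measure_ball_pos _ _ hr).ne' measure_ball_lt_top.ne

section bmo
variable (d : ℕ) (f : Ed d → ℂ) (N : ℝ)

lemma osc_one (hN : 0 ≤ N)
    (hL2 : ∀ (z : Ed d) (r : ℝ), MemLp f 2 (volume.restrict (Metric.ball z r)))
    (hB : ∀ (z : Ed d) (r : ℝ), 0 < r →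
          (volume (Metric.ball z r)).toReal⁻¹ *
            ∫ t in Metric.ball z r, ‖f t - avgB d f z r‖ ^ 2 ≤ N ^ 2)
    (z : Ed d) (r : ℝ) (hr : 0 < r) :
    ∫ t in Metric.ball z r, ‖f t - avgB d f z r‖ ≤ N * (volume (Metric.ball z r)).toReal := by
  have hfin := fun r' => finite_ball d z r'
  set c := avgB d f z r
  have hV := vol_pos d z r hr
  have h1 := hB z r hr
  set V := (volume (Metric.ball z r)).toReal with hVdef
  rw [inv_mul_le_iff₀ hV] at h1
  have hm : MemLp (fun t => f t - c) 2 (volume.restrict (Metric.ball z r)) :=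
    (hL2 z r).sub (memLp_const c)
  have hsq := (memLp_two_iff_integrable_sq_norm hm.aestronglyMeasurable).1 hm
  have hi := (hm.integrable (by norm_num)).norm
  rw [← div_le_iff₀ hV]
  refine le_of_forall_gt_imp_ge_of_dense fun l hl => ?_
  have hl0 : 0 < l := hN.trans_lt hl
  rw [div_le_iff₀ hV]
  calc ∫ t in Metric.ball z r, ‖f t - c‖
      ≤ ∫ t in Metric.ball z r, (2 * l)⁻¹ * ‖f t - c‖ ^ 2 + l / 2 := by
        refine integral_mono hi ((hsq.const_mul _).add (integrable_const _)) fun t => ?_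
        have : (2 * l)⁻¹ * ‖f t - c‖ ^ 2 + l / 2 - ‖f t - c‖
            = (2 * l)⁻¹ * (‖f t - c‖ - l) ^ 2 := by
          field_simp; ring
        have h2 : 0 ≤ (2 * l)⁻¹ * (‖f t - c‖ - l) ^ 2 := by positivity
        beta_reduce
        linarith
    _ = (2 * l)⁻¹ * (∫ t in Metric.ball z r, ‖f t - c‖ ^ 2) + V * (l / 2) := by
        rw [integral_add (hsq.const_mul _) (integrable_const _), integral_const_mul]
        simp [Measure.real, hVdef]
    _ ≤ (2 * l)⁻¹ * (V * l ^ 2) + V * (l / 2) := by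
        gcongr
        exact h1.trans (by gcongr)
    _ = l * V := by field_simp; ring

lemma avg_diff (hN : 0 ≤ N)
    (hL2 : ∀ (z : Ed d) (r : ℝ), MemLp f 2 (volume.restrict (Metric.ball z r)))
    (hB : ∀ (z : Ed d) (r : ℝ), 0 < r →
          (volume (Metric.ball z r)).toReal⁻¹ *
            ∫ t in Metric.ball z r, ‖f t - avgB d f z r‖ ^ 2 ≤ N ^ 2)
    (z : Ed d) (r : ℝ) (hr : 0 < r) :
    ‖avgB d f z r - avgB d f z (2 * r)‖ ≤ 2 ^ d * N := by
  have hfin := fun r' => finite_ball d z r'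
  set c := avgB d f z (2 * r)
  have hV := vol_pos d z r hr
  have hfi : ∀ r', Integrable f (volume.restrict (Metric.ball z r')) := fun r' =>
    (hL2 z r').integrable (by norm_num)
  have h1 : avgB d f z r - c
      = (volume (Metric.ball z r)).toReal⁻¹ • ∫ t in Metric.ball z r, (f t - c) := by
    rw [integral_sub (hfi r) (integrable_const _), smul_sub, avgB]
    simp only [integral_const, Measure.real, Measure.restrict_apply_univ]
    rw [smul_smul, inv_mul_cancel₀ hV.ne', one_smul]
  have hi2 : IntegrableOn (fun t => ‖f t - c‖) (Metric.ball z (2 * r)) :=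
    ((hfi (2 * r)).sub (integrable_const c)).norm
  rw [h1, norm_smul, Real.norm_of_nonneg (by positivity), inv_mul_le_iff₀ hV]
  calc ‖∫ t in Metric.ball z r, (f t - c)‖ ≤ ∫ t in Metric.ball z r, ‖f t - c‖ :=
        norm_integral_le_integral_norm _
    _ ≤ ∫ t in Metric.ball z (2 * r), ‖f t - c‖ :=
        setIntegral_mono_set hi2 (Eventually.of_forall fun _ => norm_nonneg _)
          (Metric.ball_subset_ball (by linarith)).eventuallyLE
    _ ≤ N * (volume (Metric.ball z (2 * r))).toReal :=
        osc_one d f N hN hL2 hB z (2 * r) (by linarith)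
    _ = _ := by
        rw [vol_ball d z (2 * r) (by linarith), vol_ball d z r hr]
        ring

lemma avg_diff_pow (hN : 0 ≤ N)
    (hL2 : ∀ (z : Ed d) (r : ℝ), MemLp f 2 (volume.restrict (Metric.ball z r)))
    (hB : ∀ (z : Ed d) (r : ℝ), 0 < r →
          (volume (Metric.ball z r)).toReal⁻¹ *
            ∫ t in Metric.ball z r, ‖f t - avgB d f z r‖ ^ 2 ≤ N ^ 2)
    (z : Ed d) (r : ℝ) (hr : 0 < r) (k : ℕ) :
    ‖avgB d f z (2 ^ k * r) - avgB d f z r‖ ≤ k * (2 ^ d * N) := by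
  induction k with
  | zero => simp
  | succ k ih =>
    have h1 := avg_diff d f N hN hL2 hB z (2 ^ k * r) (by positivity)
    have h2 : (2 : ℝ) ^ (k + 1) * r = 2 * (2 ^ k * r) := by ring
    rw [h2]
    have h3 := norm_sub_le_norm_sub_add_norm_sub (avgB d f z (2 * (2 ^ k * r)))
      (avgB d f z (2 ^ k * r)) (avgB d f z r)
    rw [norm_sub_rev (avgB d f z (2 * (2 ^ k * r))) (avgB d f z (2 ^ k * r))] at h3
    push_cast
    linarith

lemma osc_pow (hN : 0 ≤ N)
    (hL2 : ∀ (z : Ed d) (r : ℝ), MemLp f 2 (volume.restrict (Metric.ball z r)))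
    (hB : ∀ (z : Ed d) (r : ℝ), 0 < r →
          (volume (Metric.ball z r)).toReal⁻¹ *
            ∫ t in Metric.ball z r, ‖f t - avgB d f z r‖ ^ 2 ≤ N ^ 2)
    (z : Ed d) (r : ℝ) (hr : 0 < r) (k : ℕ) :
    ∫⁻ t in Metric.ball z (2 ^ k * r), ‖f t - avgB d f z r‖ₑ
      ≤ ENNReal.ofReal ((k + 1) * 2 ^ d * N * (volume (Metric.ball z (2 ^ k * r))).toReal) := by
  have hfin := fun r' => finite_ball d z r'
  have hfi : Integrable f (volume.restrict (Metric.ball z (2 ^ k * r))) :=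
    (hL2 z _).integrable (by norm_num)
  have hV := vol_pos d z (2 ^ k * r) (by positivity)
  set c := avgB d f z r
  have hi := hfi.sub (integrable_const c)
  have h0 : ∫⁻ t in Metric.ball z (2 ^ k * r), ‖f t - c‖ₑ
      = ENNReal.ofReal (∫ t in Metric.ball z (2 ^ k * r), ‖f t - c‖) :=
    (ofReal_integral_norm_eq_lintegral_enorm hi).symm
  rw [h0]
  apply ENNReal.ofReal_le_ofReal
  set c' := avgB d f z (2 ^ k * r) with hc'
  have hcc : ‖c' - c‖ ≤ k * (2 ^ d * N) := avg_diff_pow d f N hN hL2 hB z r hr k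
  calc ∫ t in Metric.ball z (2 ^ k * r), ‖f t - c‖
      ≤ ∫ t in Metric.ball z (2 ^ k * r), (‖f t - c'‖ + k * (2 ^ d * N)) := by
        refine integral_mono hi.norm ((hfi.sub (integrable_const c')).norm.add
          (integrable_const _)) fun t => ?_
        have := norm_sub_le_norm_sub_add_norm_sub (f t) c' c
        beta_reduce
        linarith
    _ = (∫ t in Metric.ball z (2 ^ k * r), ‖f t - c'‖)
          + (volume (Metric.ball z (2 ^ k * r))).toReal * (k * (2 ^ d * N)) := by
        have hi' : Integrable (fun t => ‖f t - c'‖)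
            (volume.restrict (Metric.ball z (2 ^ k * r))) := (hfi.sub (integrable_const c')).norm
        rw [integral_add hi' (integrable_const _)]
        simp [Measure.real]
    _ ≤ N * (volume (Metric.ball z (2 ^ k * r))).toReal
          + (volume (Metric.ball z (2 ^ k * r))).toReal * (k * (2 ^ d * N)) := by
        gcongr
        exact osc_one d f N hN hL2 hB z _ (by positivity)
    _ ≤ _ := by
        have : (1 : ℝ) ≤ 2 ^ d := one_le_pow₀ (by norm_num)
        have h5 := mul_le_mul_of_nonneg_right this
          (mul_nonneg hN hV.le)
        nlinarith

lemma tail (Φ : SchwartzMap (Ed d) ℂ) (A : ℝ) (hA0 : 0 ≤ A)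
    (hA : ∀ x : Ed d, ‖x‖ ^ (d + 1) * ‖Φ x‖ ≤ A) (hN : 0 ≤ N)
    (hL2 : ∀ (z : Ed d) (r : ℝ), MemLp f 2 (volume.restrict (Metric.ball z r)))
    (hB : ∀ (z : Ed d) (r : ℝ), 0 < r →
          (volume (Metric.ball z r)).toReal⁻¹ *
            ∫ t in Metric.ball z r, ‖f t - avgB d f z r‖ ^ 2 ≤ N ^ 2)
    (z : Ed d) (r : ℝ) (hr : 0 < r) (s : Ed d) (hs : s ∈ Metric.ball z r) (ε : ℝ) (hε : 0 < ε) :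
    ∫⁻ t in (Metric.ball z (2 * r))ᶜ,
        ‖dil d (fun x => Φ x) ε (s - t) * (f t - avgB d f z (2 * r))‖ₑ
      ≤ ENNReal.ofReal ((A * 8 ^ d * (volume (Metric.ball (0 : Ed d) 1)).toReal *
          ∑' k : ℕ, ((k : ℝ) + 2) * (1 / 2) ^ k) * (ε / r) * N) := by
  set c := avgB d f z (2 * r)
  set ω := (volume (Metric.ball (0 : Ed d) 1)).toReal with hω
  have hω0 : 0 ≤ ω := ENNReal.toReal_nonneg
  set S : ℕ → Set (Ed d) := fun k =>
    Metric.ball z (2 ^ (k + 1) * (2 * r)) \ Metric.ball z (2 ^ k * (2 * r)) with hS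
  have hcover : (Metric.ball z (2 * r))ᶜ ⊆ ⋃ k, S k := by
    intro t ht
    have ht' : 2 * r ≤ dist t z := by simpa using ht
    have hx : 1 ≤ dist t z / (2 * r) := by rwa [le_div_iff₀ (by positivity), one_mul]
    obtain ⟨k, hk1, hk2⟩ := exists_nat_pow_near hx (y := (2 : ℝ)) (by norm_num)
    rw [le_div_iff₀ (by positivity)] at hk1
    rw [div_lt_iff₀ (by positivity)] at hk2
    refine Set.mem_iUnion.2 ⟨k, ?_⟩
    simp only [hS, Set.mem_sdiff, Metric.mem_ball, not_lt]
    exact ⟨hk2, hk1⟩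
  have hsum : Summable (fun k : ℕ => ((k : ℝ) + 2) * (1 / 2 : ℝ) ^ k) := by
    have h1 := summable_pow_mul_geometric_of_norm_lt_one (R := ℝ) 1 (r := 1 / 2) (by norm_num)
    have h2 := summable_pow_mul_geometric_of_norm_lt_one (R := ℝ) 0 (r := 1 / 2) (by norm_num)
    refine (h1.add (h2.mul_left 2)).congr fun k => ?_
    simp; ring
  set D := A * 8 ^ d * ω * (ε / r) * N with hD
  have hD0 : 0 ≤ D := by positivity
  have hpiece : ∀ k : ℕ, ∫⁻ t in S k, ‖dil d (fun x => Φ x) ε (s - t) * (f t - c)‖ₑ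
      ≤ ENNReal.ofReal (D * (((k : ℝ) + 2) * (1 / 2) ^ k)) := by
    intro k
    have hker : ∀ t ∈ S k, ‖dil d (fun x => Φ x) ε (s - t)‖ ≤ A * ε / (2 ^ k * r) ^ (d + 1) := by
      intro t ht
      simp only [hS, Set.mem_sdiff, Metric.mem_ball, not_lt] at ht
      have h1 : dist s z < r := hs
      have h2 : dist t z ≤ dist s t + dist s z := by
        rw [dist_comm s t]; exact dist_triangle _ _ _
      have h3 : (1 : ℝ) ≤ 2 ^ k := one_le_pow₀ (by norm_num)
      have h4 : 2 ^ k * r ≤ ‖s - t‖ := by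
        rw [← dist_eq_norm]
        nlinarith [ht.2]
      have h5 := hA (ε⁻¹ • (s - t))
      rw [norm_smul, norm_inv, Real.norm_of_nonneg hε.le] at h5
      simp only [dil, norm_mul, norm_inv, norm_pow, Complex.norm_real, Real.norm_of_nonneg hε.le]
      rw [le_div_iff₀ (by positivity)]
      calc (ε ^ d)⁻¹ * ‖Φ (ε⁻¹ • (s - t))‖ * (2 ^ k * r) ^ (d + 1)
          ≤ (ε ^ d)⁻¹ * ‖Φ (ε⁻¹ • (s - t))‖ * ‖s - t‖ ^ (d + 1) := by gcongr
        _ = ((ε⁻¹ * ‖s - t‖) ^ (d + 1) * ‖Φ (ε⁻¹ • (s - t))‖) * ε := by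
            rw [mul_pow, inv_pow]
            generalize ‖Φ (ε⁻¹ • (s - t))‖ = y
            field_simp
            ring
        _ ≤ A * ε := by gcongr
    calc ∫⁻ t in S k, ‖dil d (fun x => Φ x) ε (s - t) * (f t - c)‖ₑ
        ≤ ∫⁻ t in S k, ENNReal.ofReal (A * ε / (2 ^ k * r) ^ (d + 1)) * ‖f t - c‖ₑ := by
          refine setLIntegral_mono' (measurableSet_ball.diff measurableSet_ball) fun t ht => ?_
          rw [enorm_mul, ← ofReal_norm (dil d (fun x => Φ x) ε (s - t))]
          gcongr
          exact hker t ht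
      _ ≤ ENNReal.ofReal (A * ε / (2 ^ k * r) ^ (d + 1)) *
            ∫⁻ t in Metric.ball z (2 ^ (k + 1) * (2 * r)), ‖f t - c‖ₑ := by
          rw [lintegral_const_mul' _ _ (by simp)]
          gcongr
          exact Set.sdiff_subset
      _ ≤ ENNReal.ofReal (A * ε / (2 ^ k * r) ^ (d + 1)) *
            ENNReal.ofReal (((k + 1 : ℕ) + 1) * 2 ^ d * N *
              (volume (Metric.ball z (2 ^ (k + 1) * (2 * r)))).toReal) := by
          gcongr
          exact osc_pow d f N hN hL2 hB z (2 * r) (by positivity) (k + 1)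
      _ = _ := by
          rw [← ENNReal.ofReal_mul (by positivity), vol_ball d z _ (by positivity), ← hω, hD]
          congr 1
          have e8 : (8 : ℝ) ^ d = 2 ^ d * 2 ^ d * 2 ^ d := by
            rw [← mul_pow, ← mul_pow]; norm_num
          rw [e8]
          push_cast
          simp only [mul_pow, pow_succ, one_div, inv_pow]
          field_simp
          ring
  calc _ ≤ ∫⁻ t in ⋃ k, S k, ‖dil d (fun x => Φ x) ε (s - t) * (f t - c)‖ₑ :=
        lintegral_mono_set hcover
    _ ≤ ∑' k, ∫⁻ t in S k, ‖dil d (fun x => Φ x) ε (s - t) * (f t - c)‖ₑ :=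
        lintegral_iUnion_le _ _
    _ ≤ ∑' k : ℕ, ENNReal.ofReal (D * (((k : ℝ) + 2) * (1 / 2) ^ k)) :=
        ENNReal.tsum_le_tsum hpiece
    _ = ENNReal.ofReal (∑' k : ℕ, D * (((k : ℝ) + 2) * (1 / 2) ^ k)) :=
        (ENNReal.ofReal_tsum_of_nonneg (fun k => by positivity) (hsum.mul_left D)).symm
    _ = _ := by
        rw [tsum_mul_left, hD]
        congr 1
        ring
end bmo

lemma integral_dil (d : ℕ) (Φ : SchwartzMap (Ed d) ℂ) (hΦ0 : ∫ s, Φ s = 0) (ε : ℝ) (s : Ed d) :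
    ∫ t, dil d (fun x => Φ x) ε (s - t) = 0 := by
  rw [integral_sub_left_eq_self (fun t => dil d (fun x => Φ x) ε t) volume s]
  simp only [dil]
  rw [integral_const_mul, Measure.integral_comp_inv_smul, hΦ0]
  simp

lemma cnv_split (d : ℕ) (Φ : SchwartzMap (Ed d) ℂ) (hΦ0 : ∫ s, Φ s = 0) (f : Ed d → ℂ)
    (c : ℂ) (U : Set (Ed d)) (hU : MeasurableSet U) (ε : ℝ) (hε : 0 < ε) (s : Ed d) (b : ℝ)
    (hb0 : 0 ≤ b)
    (hb : ∫⁻ t in Uᶜ, ‖dil d (fun x => Φ x) ε (s - t) * (f t - c)‖ₑ ≤ ENNReal.ofReal b) :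
    ‖cnv d (dil d (fun x => Φ x) ε) f s‖ ≤
      ‖cnv d (dil d (fun x => Φ x) ε) (U.indicator fun t => f t - c) s‖ + b := by
  by_cases hi : Integrable (fun t => dil d (fun x => Φ x) ε (s - t) * f t)
  swap
  · rw [cnv, integral_undef hi, norm_zero]
    positivity
  have hk : Integrable (fun t => dil d (fun x => Φ x) ε (s - t)) := by
    have := (dilS d Φ ε hε).integrable (μ := volume)
    have := this.comp_sub_left s
    simpa only [dilS_apply] using this
  have hkc := hk.mul_const c
  have hg : Integrable (fun t => dil d (fun x => Φ x) ε (s - t) * (f t - c)) := by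
    refine (hi.sub hkc).congr (Eventually.of_forall fun t => ?_)
    simp only [Pi.sub_apply]
    ring
  have h1 : cnv d (dil d (fun x => Φ x) ε) f s =
      ∫ t, dil d (fun x => Φ x) ε (s - t) * (f t - c) := by
    simp_rw [mul_sub]
    rw [integral_sub hi hkc, integral_mul_const, integral_dil d Φ hΦ0, zero_mul, sub_zero, cnv]
  have h2 : cnv d (dil d (fun x => Φ x) ε) (U.indicator fun t => f t - c) s =
      ∫ t in U, dil d (fun x => Φ x) ε (s - t) * (f t - c) := by
    rw [← integral_indicator hU, cnv]
    congr 1; ext t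
    by_cases ht : t ∈ U <;> simp [ht]
  rw [h1, h2, ← integral_add_compl hU hg]
  refine (norm_add_le _ _).trans ?_
  gcongr
  have h3 := (enorm_integral_le_lintegral_enorm (μ := volume.restrict Uᶜ)
    (fun t => dil d (fun x => Φ x) ε (s - t) * (f t - c))).trans hb
  rw [← ofReal_norm] at h3
  exact (ENNReal.ofReal_le_ofReal_iff hb0).1 h3

/-- Scalar-valued case of Lemma 3.1: for `f ∈ BMO`, `|Φ_ε*f(s)|² ds dε/ε` is a
Carleson measure with norm `≲ ‖f‖²_{BMO}`. -/
theorem bmo_gives_carleson_measure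
    (d : ℕ) (hd : 1 ≤ d) (Φ : SchwartzMap (Ed d) ℂ) (hΦ0 : ∫ s, Φ s = 0) :
    ∃ C : ℝ, 0 < C ∧
      ∀ (N : ℝ), 0 ≤ N → ∀ f : Ed d → ℂ, Measurable f →
        Integrable (fun t : Ed d => ‖f t‖ ^ 2 / (1 + ‖t‖) ^ (d + 1)) volume →
        (∀ (z : Ed d) (r : ℝ), 0 < r →
          (volume (Metric.ball z r)).toReal⁻¹ *
            ∫ t in Metric.ball z r, ‖f t - avgB d f z r‖ ^ 2 ≤ N ^ 2) →
        ∀ (z : Ed d) (r : ℝ), 0 < r →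
          ∫ s in Metric.ball z r,
              ∫ ε in Set.Ioc (0 : ℝ) r, ‖cnv d (dil d (fun x => Φ x) ε) f s‖ ^ 2 / ε ≤
            C * N ^ 2 * (volume (Metric.ball z r)).toReal := by
  obtain ⟨K, hK, hKΦ⟩ := fourier_bound d Φ hΦ0
  set A := SchwartzMap.seminorm ℝ (d + 1) 0 Φ
  have hA0 : 0 ≤ A := apply_nonneg _ _
  have hA : ∀ x : Ed d, ‖x‖ ^ (d + 1) * ‖Φ x‖ ≤ A :=
    SchwartzMap.norm_pow_mul_le_seminorm ℝ Φ (d + 1)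
  set M := A * 8 ^ d * (volume (Metric.ball (0 : Ed d) 1)).toReal *
          ∑' k : ℕ, ((k : ℝ) + 2) * (1 / 2) ^ k with hM
  have hM0 : 0 ≤ M := by
    have : 0 ≤ ∑' k : ℕ, ((k : ℝ) + 2) * (1 / 2 : ℝ) ^ k := tsum_nonneg fun k => by positivity
    positivity
  refine ⟨2 * K ^ 2 * 2 ^ d + 2 * M ^ 2, by positivity, ?_⟩
  intro N hN f hfm hint hB z r hr
  have hL2 := memLp_ball d f hfm hint
  have hfin := fun r' => finite_ball d z r'
  set c := avgB d f z (2 * r) with hc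
  set U := Metric.ball z (2 * r) with hU
  have hUm : MeasurableSet U := measurableSet_ball
  set f1 : Ed d → ℂ := U.indicator fun t => f t - c with hf1
  have hf1m : Measurable f1 := (hfm.sub_const c).indicator hUm
  have hmc : MemLp (fun t => f t - c) 2 (volume.restrict U) := (hL2 z (2 * r)).sub (memLp_const c)
  have hf1L : MemLp f1 2 := (memLp_indicator_iff_restrict hUm).2 hmc
  have hV := vol_pos d z r hr
  set V := (volume (Metric.ball z r)).toReal with hVdef
  have hVe : volume (Metric.ball z r) = ENNReal.ofReal V :=
    (ENNReal.ofReal_toReal measure_ball_lt_top.ne).symm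
  -- L² norm of the local part
  have hlocal : ∫⁻ s, ‖f1 s‖ₑ ^ 2 ≤ ENNReal.ofReal (N ^ 2 * (2 ^ d * V)) := by
    have h1 : ∫⁻ s, ‖f1 s‖ₑ ^ 2 = ∫⁻ s in U, ‖f s - c‖ₑ ^ 2 := by
      rw [← lintegral_indicator hUm]
      congr 1; ext t
      by_cases ht : t ∈ U <;> simp [hf1, ht]
    have hsq := (memLp_two_iff_integrable_sq_norm hmc.aestronglyMeasurable).1 hmc
    have h2 : ∫⁻ s in U, ‖f s - c‖ₑ ^ 2 = ENNReal.ofReal (∫ s in U, ‖f s - c‖ ^ 2) := by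
      rw [ofReal_integral_eq_lintegral_ofReal hsq (Eventually.of_forall fun _ => by positivity)]
      simp [ENNReal.ofReal_pow, ofReal_norm]
    rw [h1, h2]
    apply ENNReal.ofReal_le_ofReal
    have h3 := hB z (2 * r) (by positivity)
    rw [inv_mul_le_iff₀ (vol_pos d z _ (by positivity)), vol_ball d z _ (by positivity)] at h3
    rw [hVdef, vol_ball d z r hr]
    refine h3.trans (le_of_eq ?_)
    ring
  have hpt : ∀ s ∈ Metric.ball z r, ∀ ε ∈ Set.Ioc (0 : ℝ) r,
      ‖‖cnv d (dil d (fun x => Φ x) ε) f s‖ ^ 2 / ε‖ₑ ≤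
        2 * (‖cnv d (dil d (fun x => Φ x) ε) f1 s‖ₑ ^ 2 * ENNReal.ofReal ε⁻¹)
          + ENNReal.ofReal (2 * M ^ 2 * N ^ 2 / r) := by
    intro s hs ε hε
    have hε0 : 0 < ε := hε.1
    have h1 := cnv_split d Φ hΦ0 f c U hUm ε hε0 s (M * (ε / r) * N) (by positivity)
      (tail d f N Φ A hA0 hA hN hL2 hB z r hr s hs ε hε0)
    rw [← hf1] at h1
    set a := cnv d (dil d (fun x => Φ x) ε) f1 s
    set x := cnv d (dil d (fun x => Φ x) ε) f s
    have h2 : ‖x‖ ^ 2 / ε ≤ 2 * (‖a‖ ^ 2 * ε⁻¹) + 2 * M ^ 2 * N ^ 2 / r := by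
      calc ‖x‖ ^ 2 / ε ≤ (‖a‖ + M * (ε / r) * N) ^ 2 / ε := by gcongr
        _ ≤ (2 * ‖a‖ ^ 2 + 2 * (M * (ε / r) * N) ^ 2) / ε := by
            gcongr
            nlinarith [sq_nonneg (‖a‖ - M * (ε / r) * N)]
        _ = 2 * (‖a‖ ^ 2 * ε⁻¹) + 2 * M ^ 2 * N ^ 2 / r * (ε / r) := by
            field_simp
        _ ≤ 2 * (‖a‖ ^ 2 * ε⁻¹) + 2 * M ^ 2 * N ^ 2 / r * 1 := by
            gcongr
            exact (div_le_one hr).2 hε.2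
        _ = _ := by ring
    rw [Real.enorm_of_nonneg (by positivity)]
    refine (ENNReal.ofReal_le_ofReal h2).trans (le_of_eq ?_)
    rw [ENNReal.ofReal_add (by positivity) (by positivity), ENNReal.ofReal_mul (by norm_num),
      ENNReal.ofReal_mul (by positivity), ENNReal.ofReal_pow (by positivity), ofReal_norm]
    simp
  have hinner : ∀ s ∈ Metric.ball z r,
      ∫⁻ ε in Set.Ioc (0 : ℝ) r, ‖‖cnv d (dil d (fun x => Φ x) ε) f s‖ ^ 2 / ε‖ₑ ≤
        2 * (∫⁻ ε in Set.Ioi (0 : ℝ), ‖cnv d (dil d (fun x => Φ x) ε) f1 s‖ₑ ^ 2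
          * ENNReal.ofReal ε⁻¹) + ENNReal.ofReal (2 * M ^ 2 * N ^ 2) := by
    intro s hs
    refine (setLIntegral_mono' measurableSet_Ioc (hpt s hs)).trans ?_
    rw [lintegral_add_right _ measurable_const, lintegral_const_mul' _ _ (by simp)]
    gcongr
    · exact Set.Ioc_subset_Ioi_self
    · rw [setLIntegral_const, Real.volume_Ioc, ← ENNReal.ofReal_mul (by positivity)]
      apply ENNReal.ofReal_le_ofReal
      rw [sub_zero, div_mul_cancel₀ _ hr.ne']
  have hmain : ‖∫ s in Metric.ball z r,
      ∫ ε in Set.Ioc (0 : ℝ) r, ‖cnv d (dil d (fun x => Φ x) ε) f s‖ ^ 2 / ε‖ₑ ≤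
      ENNReal.ofReal ((2 * K ^ 2 * 2 ^ d + 2 * M ^ 2) * N ^ 2 * V) := by
    calc _ ≤ ∫⁻ s in Metric.ball z r,
          ‖∫ ε in Set.Ioc (0 : ℝ) r, ‖cnv d (dil d (fun x => Φ x) ε) f s‖ ^ 2 / ε‖ₑ :=
          enorm_integral_le_lintegral_enorm _
      _ ≤ ∫⁻ s in Metric.ball z r,
          (2 * (∫⁻ ε in Set.Ioi (0 : ℝ), ‖cnv d (dil d (fun x => Φ x) ε) f1 s‖ₑ ^ 2
          * ENNReal.ofReal ε⁻¹) + ENNReal.ofReal (2 * M ^ 2 * N ^ 2)) :=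
          setLIntegral_mono' measurableSet_ball fun s hs =>
            (enorm_integral_le_lintegral_enorm _).trans (hinner s hs)
      _ = 2 * (∫⁻ s in Metric.ball z r, ∫⁻ ε in Set.Ioi (0 : ℝ),
            ‖cnv d (dil d (fun x => Φ x) ε) f1 s‖ₑ ^ 2 * ENNReal.ofReal ε⁻¹)
          + ENNReal.ofReal (2 * M ^ 2 * N ^ 2) * ENNReal.ofReal V := by
          rw [lintegral_add_right _ measurable_const, lintegral_const_mul' _ _ (by simp),
            setLIntegral_const, hVe]
      _ ≤ 2 * (ENNReal.ofReal (K ^ 2) * ENNReal.ofReal (N ^ 2 * (2 ^ d * V)))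
          + ENNReal.ofReal (2 * M ^ 2 * N ^ 2) * ENNReal.ofReal V := by
          gcongr
          refine (setLIntegral_le_lintegral _ _).trans ?_
          refine (square_L2 d Φ K hK hKΦ f1 hf1m hf1L).trans ?_
          gcongr
      _ = _ := by
          rw [← ENNReal.ofReal_mul (by positivity), ← ENNReal.ofReal_mul (by positivity),
            show (2 : ℝ≥0∞) = ENNReal.ofReal 2 by simp, ← ENNReal.ofReal_mul (by positivity),
            ← ENNReal.ofReal_add (by positivity) (by positivity)]
          congr 1
          ring
  have h4 := (Real.ofReal_le_enorm _).trans hmain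
  exact (ENNReal.ofReal_le_ofReal_iff (by positivity)).1 h4
end
end

section
/- Let d ≥ 1 and let Φ be a complex-valued Schwartz function on ℝ^d with ∫_{ℝ^d} Φ = 0 which is nondegenerate, i.e. for every ξ ∈ ℝ^d \ {0} there exists ε > 0 with Φ̂(εξ) ≠ 0. Then there exists a complex-valued Schwartz function Ψ on ℝ^d with ∫_{ℝ^d} Ψ = 0 such that for every ξ ∈ ℝ^d \ {0} the integral ∫_0^∞ Φ̂(εξ) · conj(Ψ̂(εξ)) dε/ε converges absolutely and equals 1. -/
open MeasureTheory Real FourierTransform Complex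

noncomputable section

lemma aux_integrable {d : ℕ} (G : Ed d → ℝ) (hG : Continuous G) (a b : ℝ) (ha : 0 < a)
    (hGa : ∀ ξ, ‖ξ‖ ≤ a → G ξ = 0) (hGb : ∀ ξ, b ≤ ‖ξ‖ → G ξ = 0) (ξ : Ed d) (hξ : ξ ≠ 0) :
    IntegrableOn (fun t : ℝ => G (t • ξ) / t) (Set.Ioi 0) volume := by
  have hn : 0 < ‖ξ‖ := norm_pos_iff.mpr hξ
  have h1 : IntegrableOn (fun t : ℝ => G (t • ξ) / t) (Set.Icc (a / ‖ξ‖) (b / ‖ξ‖)) volume := by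
    apply ContinuousOn.integrableOn_Icc
    apply ContinuousOn.div
    · exact (hG.comp (by fun_prop)).continuousOn
    · exact continuousOn_id
    · intro t ht
      exact ((div_pos ha hn).trans_le ht.1).ne'
  refine IntegrableOn.of_forall_sdiff_eq_zero h1 measurableSet_Ioi ?_
  rintro t ⟨ht, ht2⟩
  have ht : 0 < t := ht
  have hnt : ‖t • ξ‖ = t * ‖ξ‖ := by rw [norm_smul, Real.norm_of_nonneg ht.le]
  have : G (t • ξ) = 0 := by
    by_cases h : a / ‖ξ‖ ≤ t
    · apply hGb
      rw [hnt]
      have : b / ‖ξ‖ < t := by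
        by_contra h'
        exact ht2 ⟨h, not_lt.mp h'⟩
      exact ((div_lt_iff₀ hn).mp this).le
    · apply hGa
      rw [hnt]
      exact ((lt_div_iff₀ hn).mp (not_le.mp h)).le
  simp [this]

lemma aux_pos {d : ℕ} (G : Ed d → ℝ) (hG : Continuous G) (a b : ℝ) (ha : 0 < a)
    (hGa : ∀ ξ, ‖ξ‖ ≤ a → G ξ = 0) (hGb : ∀ ξ, b ≤ ‖ξ‖ → G ξ = 0) (hG0 : ∀ ξ, 0 ≤ G ξ)
    (ξ : Ed d) (hξ : ξ ≠ 0) (hex : ∃ t : ℝ, 0 < t ∧ G (t • ξ) ≠ 0) :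
    0 < ∫ t in Set.Ioi (0 : ℝ), G (t • ξ) / t := by
  rw [setIntegral_pos_iff_support_of_nonneg_ae _ (aux_integrable G hG a b ha hGa hGb ξ hξ)]
  · have ho : IsOpen ({t : ℝ | G (t • ξ) ≠ 0} ∩ Set.Ioi 0) :=
      (isOpen_ne_fun (hG.comp (by fun_prop)) continuous_const).inter isOpen_Ioi
    obtain ⟨t, ht, ht2⟩ := hex
    refine (ho.measure_pos volume ⟨t, ht2, ht⟩).trans_le (measure_mono ?_)
    rintro x ⟨hx1, hx2⟩
    exact ⟨div_ne_zero hx1 (ne_of_gt hx2), hx2⟩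
  · refine (ae_restrict_iff' measurableSet_Ioi).mpr (Filter.Eventually.of_forall ?_)
    intro t ht
    exact div_nonneg (hG0 _) (le_of_lt ht)

lemma aux_homog {d : ℕ} (G : Ed d → ℝ) (ξ : Ed d) (e : ℝ) (he : 0 < e) :
    ∫ t in Set.Ioi (0 : ℝ), G (t • (e • ξ)) / t = ∫ t in Set.Ioi (0 : ℝ), G (t • ξ) / t := by
  have := integral_comp_mul_right_Ioi' (fun t : ℝ => G (t • ξ) / t) 0 he
  rw [zero_mul] at this
  rw [← this, ← integral_smul]
  congr 1
  ext t
  simp only [smul_eq_mul, smul_smul]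
  field_simp

lemma aux_smooth {d : ℕ} (G : Ed d → ℝ) (hG : ContDiff ℝ (⊤ : ℕ∞) G) (a b : ℝ) (ha : 0 < a)
    (hGa : ∀ ξ, ‖ξ‖ ≤ a → G ξ = 0) (hGb : ∀ ξ, b ≤ ‖ξ‖ → G ξ = 0) (r R : ℝ) (hr : 0 < r)
    (hR : 0 < R) :
    ContDiffOn ℝ (⊤ : ℕ∞) (fun ξ : Ed d => ∫ t in Set.Ioi (0 : ℝ), G (t • ξ) / t)
      {ξ | r < ‖ξ‖ ∧ ‖ξ‖ < R} := by
  set s : Set (Ed d) := {ξ | r < ‖ξ‖ ∧ ‖ξ‖ < R} with hs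
  have hso : IsOpen s :=
    (isOpen_lt continuous_const continuous_norm).inter (isOpen_lt continuous_norm continuous_const)
  have hc : 0 < a / R := div_pos ha hR
  let f : ℝ → ℝ := (Set.Ioi (a / R)).indicator (fun t => (max t (a / R))⁻¹)
  have hf : LocallyIntegrable f volume := by
    apply LocallyIntegrable.indicator _ measurableSet_Ioi
    apply Continuous.locallyIntegrable
    apply Continuous.inv₀ (by fun_prop)
    intro t
    exact (hc.trans_le (le_max_right _ _)).ne'
  let g : Ed d → ℝ → ℝ := fun ξ x => G ((-x) • ξ)
  have key := contDiffOn_convolution_right_with_param (n := ⊤) (μ := volume)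
    (ContinuousLinearMap.mul ℝ ℝ) (f := f) (g := g) (s := s)
    (k := Metric.closedBall 0 (b / r)) hso (isCompact_closedBall _ _) ?_ hf ?_
  · have h2 : ContDiffOn ℝ (⊤ : ℕ∞) (fun ξ : Ed d =>
        (convolution f (g ξ) (ContinuousLinearMap.mul ℝ ℝ) volume) 0) s := by
      have := key.comp (s := s) (f := fun ξ : Ed d => (ξ, (0 : ℝ))) (by fun_prop)
        (fun ξ hξ => ⟨hξ, Set.mem_univ _⟩)
      exact this
    refine h2.congr ?_
    intro ξ hξ
    rw [convolution_def, ← integral_indicator measurableSet_Ioi]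
    congr 1
    ext t
    simp only [f, g, ContinuousLinearMap.mul_apply', zero_sub, neg_neg]
    by_cases h1 : a / R < t
    · rw [Set.indicator_of_mem (show t ∈ Set.Ioi (0:ℝ) from hc.trans h1),
        Set.indicator_of_mem (show t ∈ Set.Ioi (a / R) from h1), max_eq_left h1.le]
      field_simp
    · rw [Set.indicator_of_notMem (show t ∉ Set.Ioi (a / R) from h1), zero_mul]
      by_cases h0 : 0 < t
      · rw [Set.indicator_of_mem (show t ∈ Set.Ioi (0:ℝ) from h0), hGa, zero_div]
        rw [norm_smul, Real.norm_of_nonneg h0.le]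
        have h3 : t * R ≤ a := (le_div_iff₀ hR).mp (not_lt.mp h1)
        have := mul_le_mul_of_nonneg_left hξ.2.le h0.le
        linarith
      · exact Set.indicator_of_notMem h0 _
  · intro ξ x hξ hx
    apply hGb
    rw [norm_smul, norm_neg]
    have h1 : b / r < ‖x‖ := by simpa using hx
    have h2 : b < ‖x‖ * r := (div_lt_iff₀ hr).mp h1
    have := mul_le_mul_of_nonneg_left hξ.1.le (norm_nonneg x)
    linarith
  · apply ContDiff.contDiffOn
    change ContDiff ℝ _ (fun p : Ed d × ℝ => G ((-p.2) • p.1))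
    exact hG.comp (by fun_prop)

lemma aux_cover {d : ℕ} (F : Ed d → ℂ) (hF : Continuous F)
    (hnd : ∀ ξ : Ed d, ξ ≠ 0 → ∃ ε : ℝ, 0 < ε ∧ F (ε • ξ) ≠ 0) :
    ∃ m M : ℝ, 0 < m ∧ m < M ∧
      ∀ ξ : Ed d, ξ ≠ 0 → ∃ t : ℝ, 0 < t ∧ F (t • ξ) ≠ 0 ∧ m ≤ ‖t • ξ‖ ∧ ‖t • ξ‖ ≤ M := by
  let U : ℕ → Set (Ed d) := fun n =>
    ⋃ e ∈ Set.Icc (1 / ((n : ℝ) + 2)) ((n : ℝ) + 2), {ω | F (e • ω) ≠ 0}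
  have hmono : Monotone U := by
    intro n k hnk
    have hnk' : (n : ℝ) ≤ k := by exact_mod_cast hnk
    apply Set.biUnion_subset_biUnion_left
    apply Set.Icc_subset_Icc
    · apply one_div_le_one_div_of_le <;> [positivity; linarith]
    · linarith
  obtain ⟨n, hn⟩ := (isCompact_sphere (0 : Ed d) 1).elim_directed_cover U
    (fun n => isOpen_biUnion fun e _ => isOpen_ne_fun (hF.comp (by fun_prop)) continuous_const)
    (by
      intro ω hω
      have hω0 : ω ≠ 0 := by
        rintro rfl
        simp at hω
      obtain ⟨e, he, hFe⟩ := hnd ω hω0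
      obtain ⟨n, hn⟩ := exists_nat_ge (max e (1 / e))
      simp only [U, Set.mem_iUnion]
      refine ⟨n, e, ⟨?_, ?_⟩, hFe⟩
      · have h1 : 1 / e ≤ (n : ℝ) + 2 := by linarith [le_max_right e (1 / e)]
        rw [div_le_iff₀ (by positivity)]
        rw [div_le_iff₀ he] at h1
        linarith
      · linarith [le_max_left e (1 / e)])
    hmono.directed_le
  have hn0 : (0 : ℝ) ≤ n := by positivity
  refine ⟨1 / ((n : ℝ) + 2), (n : ℝ) + 2, by positivity, ?_, ?_⟩
  · rw [div_lt_iff₀ (by positivity)]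
    nlinarith
  · intro ξ hξ
    have hp : 0 < ‖ξ‖ := norm_pos_iff.mpr hξ
    have hmem : (‖ξ‖⁻¹ • ξ) ∈ Metric.sphere (0 : Ed d) 1 := by
      simp [norm_smul, hp.ne']
    have := hn hmem
    simp only [U, Set.mem_iUnion] at this
    obtain ⟨e, he, hFe⟩ := this
    have he0 : 0 < e := lt_of_lt_of_le (by positivity) he.1
    have hnorm : ‖(e * ‖ξ‖⁻¹) • ξ‖ = e := by
      rw [norm_smul, Real.norm_of_nonneg (by positivity)]
      field_simp
    refine ⟨e * ‖ξ‖⁻¹, by positivity, ?_, ?_, ?_⟩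
    · simpa [smul_smul] using hFe
    · rw [hnorm]; exact he.1
    · rw [hnorm]; exact he.2

lemma aux_bump {d : ℕ} (m M : ℝ) (hm : 0 < m) (hmM : m < M) :
    ∃ η : Ed d → ℝ, ContDiff ℝ (⊤ : ℕ∞) η ∧ (∀ ξ, 0 ≤ η ξ) ∧
      (∀ ξ, m ≤ ‖ξ‖ → ‖ξ‖ ≤ M → η ξ = 1) ∧ (∀ ξ, ‖ξ‖ ≤ m / 2 → η ξ = 0) ∧
      (∀ ξ, 2 * M ≤ ‖ξ‖ → η ξ = 0) := by
  let f1 : ContDiffBump (0 : Ed d) := ⟨M, 2 * M, by linarith, by linarith⟩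
  let f2 : ContDiffBump (0 : Ed d) := ⟨m / 2, m, by linarith, by linarith⟩
  refine ⟨fun ξ => f1 ξ * (1 - f2 ξ), f1.contDiff.mul (contDiff_const.sub f2.contDiff), ?_, ?_, ?_, ?_⟩
  · intro ξ
    exact mul_nonneg f1.nonneg (sub_nonneg.mpr f2.le_one)
  · intro ξ h1 h2
    have e1 : f1 ξ = 1 := f1.one_of_mem_closedBall (by simpa [f1] using h2)
    have e2 : f2 ξ = 0 := f2.zero_of_le_dist (by simpa [f2] using h1)
    simp [e1, e2]
  · intro ξ h1
    have e2 : f2 ξ = 1 := f2.one_of_mem_closedBall (by simpa [f2] using h1)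
    simp [e2]
  · intro ξ h1
    have e1 : f1 ξ = 0 := f1.zero_of_le_dist (by simpa [f1] using h1)
    simp [e1]

/-- Existence of a companion function `Ψ` satisfying the reproducing
condition (1.4) for a nondegenerate Schwartz function `Φ` of vanishing mean. -/
theorem exists_companion_reproducing
    (d : ℕ) (hd : 1 ≤ d) (Φ : SchwartzMap (Ed d) ℂ)
    (hΦ0 : ∫ s, Φ s = 0)
    (hΦnd : ∀ ξ : Ed d, ξ ≠ 0 → ∃ ε : ℝ, 0 < ε ∧ 𝓕 (fun s => Φ s) (ε • ξ) ≠ 0) :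
    ∃ Ψ : SchwartzMap (Ed d) ℂ, (∫ s, Ψ s = 0) ∧
      ∀ ξ : Ed d, ξ ≠ 0 →
        IntegrableOn (fun ε : ℝ =>
          𝓕 (fun s => Φ s) (ε • ξ) * (starRingEnd ℂ) (𝓕 (fun s => Ψ s) (ε • ξ)) / (ε : ℂ))
          (Set.Ioi (0 : ℝ)) volume ∧
        ∫ ε in Set.Ioi (0 : ℝ),
          𝓕 (fun s => Φ s) (ε • ξ) * (starRingEnd ℂ) (𝓕 (fun s => Ψ s) (ε • ξ)) / (ε : ℂ) = 1 := by
  set F : SchwartzMap (Ed d) ℂ := 𝓕 Φ with hFdef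
  have hFe : ∀ ξ, 𝓕 (fun s => Φ s) ξ = F ξ := fun ξ => rfl
  simp only [hFe] at hΦnd ⊢
  have hFs : ContDiff ℝ (⊤ : ℕ∞) F := F.smooth _
  obtain ⟨m, M, hm, hmM, hcov⟩ := aux_cover F F.continuous hΦnd
  obtain ⟨η, hηs, hη0, hη1, hηm, hηM⟩ := aux_bump (d := d) m M hm hmM
  set G : Ed d → ℝ := fun ξ => ‖F ξ‖ ^ 2 * η ξ with hGdef
  have hGs : ContDiff ℝ (⊤ : ℕ∞) G := (hFs.norm_sq ℝ).mul hηs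
  have hG0 : ∀ ξ, 0 ≤ G ξ := fun ξ => mul_nonneg (by positivity) (hη0 ξ)
  have hGa : ∀ ξ, ‖ξ‖ ≤ m / 2 → G ξ = 0 := fun ξ h => by simp [hGdef, hηm ξ h]
  have hGb : ∀ ξ, 2 * M ≤ ‖ξ‖ → G ξ = 0 := fun ξ h => by simp [hGdef, hηM ξ h]
  have hm2 : 0 < m / 2 := by linarith
  set h : Ed d → ℝ := fun ξ => ∫ t in Set.Ioi (0 : ℝ), G (t • ξ) / t with hhdef
  have hpos : ∀ ξ, ξ ≠ 0 → 0 < h ξ := by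
    intro ξ hξ
    refine aux_pos G hGs.continuous (m / 2) (2 * M) hm2 hGa hGb hG0 ξ hξ ?_
    obtain ⟨t, ht, hFt, h1, h2⟩ := hcov ξ hξ
    refine ⟨t, ht, ?_⟩
    simp [hGdef, hη1 _ h1 h2, hFt]
  have hhs := aux_smooth G hGs (m / 2) (2 * M) hm2 hGa hGb (m / 4) (3 * M) (by linarith)
    (by linarith)
  set s : Set (Ed d) := {ξ | m / 4 < ‖ξ‖ ∧ ‖ξ‖ < 3 * M} with hs
  have hso : IsOpen s :=
    (isOpen_lt continuous_const continuous_norm).inter (isOpen_lt continuous_norm continuous_const)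
  let P : Ed d → ℂ := fun ξ => (η ξ / h ξ) • F ξ
  have hPs : ContDiff ℝ (⊤ : ℕ∞) P := by
    rw [contDiff_iff_contDiffAt]
    intro ξ
    by_cases hξ : ξ ∈ s
    · have h1 : ContDiffAt ℝ (⊤ : ℕ∞) h ξ := hhs.contDiffAt (hso.mem_nhds hξ)
      have hne : ξ ≠ 0 := by
        rintro rfl
        have := hξ.1
        simp at this
        linarith
      exact (hηs.contDiffAt.div h1 (hpos ξ hne).ne').smul hFs.contDiffAt
    · have hev : P =ᶠ[nhds ξ] fun _ => 0 := by
        have hor : ‖ξ‖ < m / 2 ∨ 2 * M < ‖ξ‖ := by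
          by_contra hcon
          push Not at hcon
          exact hξ ⟨by linarith [hcon.1], by linarith [hcon.2]⟩
        rcases hor with hlt | hlt
        · filter_upwards [(isOpen_lt continuous_norm continuous_const).mem_nhds hlt] with x hx
          simp [P, hηm x (le_of_lt hx)]
        · filter_upwards [(isOpen_lt continuous_const continuous_norm).mem_nhds hlt] with x hx
          simp [P, hηM x (le_of_lt hx)]
      exact contDiffAt_const.congr_of_eventuallyEq hev
  have hPc : HasCompactSupport P := by
    refine HasCompactSupport.intro (isCompact_closedBall (0 : Ed d) (2 * M)) ?_
    intro x hx
    have hx' : 2 * M < ‖x‖ := by simpa using hx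
    simp [P, hηM x hx'.le]
  let Q : SchwartzMap (Ed d) ℂ := hPc.toSchwartzMap hPs
  have hQ : ∀ ξ, 𝓕 (fun s => (𝓕⁻ Q : SchwartzMap (Ed d) ℂ) s) ξ = P ξ := by
    intro ξ
    have h1 : 𝓕 (𝓕⁻ Q : SchwartzMap (Ed d) ℂ) = Q := FourierTransform.fourier_fourierInv_eq Q
    exact congrArg (fun q : SchwartzMap (Ed d) ℂ => q ξ) h1
  refine ⟨𝓕⁻ Q, ?_, ?_⟩
  · have h0 := hQ 0
    rw [Real.fourier_eq] at h0
    simpa [P, hηm 0 (by simpa using hm2.le)] using h0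
  · intro ξ hξ
    simp only [hQ]
    have hint := aux_integrable G hGs.continuous (m / 2) (2 * M) hm2 hGa hGb ξ hξ
    have heq : Set.EqOn (fun ε : ℝ => F (ε • ξ) * (starRingEnd ℂ) (P (ε • ξ)) / (ε : ℂ))
        (fun ε : ℝ => ((G (ε • ξ) / ε / h ξ : ℝ) : ℂ)) (Set.Ioi 0) := by
      intro e he
      have hh : h (e • ξ) = h ξ := aux_homog G ξ e he
      simp only [P, hh, hGdef, Complex.real_smul, map_mul, Complex.conj_ofReal]
      have := Complex.mul_conj' (F (e • ξ))
      push_cast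
      rw [← this]
      ring
    constructor
    · rw [integrableOn_congr_fun heq measurableSet_Ioi]
      exact (hint.div_const (h ξ)).ofReal
    · rw [setIntegral_congr_fun measurableSet_Ioi heq, integral_complex_ofReal, integral_div]
      rw [show (∫ t in Set.Ioi (0 : ℝ), G (t • ξ) / t) = h ξ from rfl, div_self (hpos ξ hξ).ne']
      simp
end
end
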